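/- Let s>7/2 be an integer and α a multi-index with |α|≤s. Suppose ρ⁰∈H^{s+1}(𝕋³) with ‖ρ⁰‖_{H^{s+1}}≤K and ρ⁰≥ρ̂>0; let N∈H^s(𝕋³) with N+ρ⁰≥ρ̂/2 on 𝕋³, F∈H^s(𝕋³;ℝ³) and Θ∈H^s(𝕋³). Then for every γ>0 there is a constant C_γ=C(γ,s,K,ρ̂) such that ⟨∂^α_x(|F|²/(N+ρ⁰)), ∂^α_xΘ⟩_{L²(𝕋³)} ≤ γ‖F‖⁴_{H^s} + C_γ(1+‖(N,F)‖^{2(s+1)}_{H^s})‖∂^α_xΘ‖²_{L²}. -/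

import Mathlib

open MeasureTheory Real
open scoped ENNReal

noncomputable section

/-! ### Basic setup: periodic fields on the torus `𝕋³ = (ℝ/2πℤ)³`

Functions on the torus are modelled as `2π`-periodic functions on `ℝ³`,
with all integrals (`L²` and `H^s` norms, inner products) taken over the
fundamental cube `Q3 = [0,2π]³`. -/

/-- A point of space `ℝ³`. -/
abbrev Pt : Type := Fin 3 → ℝ

/-- Scalar fields. -/
abbrev SF : Type := Pt → ℝ

/-- Vector fields, componentwise. -/
abbrev VF : Type := Fin 3 → SF

/-- The fundamental cube `[0,2π]³` of the torus. -/
def Q3 : Set Pt := Set.univ.pi fun _ => Set.Icc 0 (2 * π)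

/-- `2π`-periodicity in each coordinate: such a function descends to `𝕋³`. -/
def PerS (f : SF) : Prop := ∀ (x : Pt) (i : Fin 3), f (x + Pi.single i (2 * π)) = f x

/-- Componentwise periodicity of a vector field. -/
def PerV (v : VF) : Prop := ∀ i, PerS (v i)

/-- SmoothS scalar field (proxy for membership in the Sobolev spaces `H^k(𝕋³)`,
together with periodicity). -/
abbrev SmoothS (f : SF) : Prop := ContDiff ℝ (⊤ : ℕ∞) f

/-- SmoothS vector field. -/
abbrev SmoothV (v : VF) : Prop := ∀ i, ContDiff ℝ (⊤ : ℕ∞) (v i)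

/-- Partial derivative `∂_i`. -/
def pd (i : Fin 3) (f : SF) : SF := fun x => fderiv ℝ f x (Pi.single i 1)

/-- Iterated partial derivative in a fixed direction. -/
def pdIter (i : Fin 3) : ℕ → SF → SF
  | 0, f => f
  | n + 1, f => pd i (pdIter i n f)

/-- The spatial derivative `∂^α_x` for a multi-index `α`. -/
def mderiv (α : Fin 3 → ℕ) (f : SF) : SF :=
  pdIter 0 (α 0) (pdIter 1 (α 1) (pdIter 2 (α 2) f))

/-- `∂^α_x` of a vector field, componentwise. -/
def mderivV (α : Fin 3 → ℕ) (v : VF) : VF := fun i => mderiv α (v i)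

/-- `L²(𝕋³)` norm of a scalar field. -/
def L2 (f : SF) : ℝ := (∫ x in Q3, (f x) ^ 2) ^ (1/2 : ℝ)

/-- `L²(𝕋³)` norm of a vector field. -/
def L2V (v : VF) : ℝ := (∫ x in Q3, ∑ i, (v i x) ^ 2) ^ (1/2 : ℝ)

/-- `L²(𝕋³)` inner product of scalar fields. -/
def ip (f g : SF) : ℝ := ∫ x in Q3, f x * g x

/-- `L²(𝕋³)` inner product of vector fields. -/
def ipV (v w : VF) : ℝ := ∫ x in Q3, ∑ i, v i x * w i x

/-- The finite set of multi-indices `α` with `|α| ≤ s`. -/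
def midx (s : ℕ) : Finset (Fin 3 → ℕ) :=
  (Fintype.piFinset fun _ => Finset.range (s + 1)).filter fun α => (∑ i, α i) ≤ s

/-- `H^s(𝕋³)` norm of a scalar field. -/
def HsNorm (s : ℕ) (f : SF) : ℝ := (∑ α ∈ midx s, (L2 (mderiv α f)) ^ 2) ^ (1/2 : ℝ)

/-- `H^s(𝕋³)` norm of a vector field. -/
def HsNormV (s : ℕ) (v : VF) : ℝ := (∑ i, (HsNorm s (v i)) ^ 2) ^ (1/2 : ℝ)

/-! ### Differential operators -/

/-- Gradient of a scalar field. -/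
def grad (f : SF) : VF := fun i => pd i f

/-- Divergence of a vector field. -/
def divv (v : VF) : SF := fun x => ∑ i, pd i (v i) x

/-- Laplacian of a scalar field. -/
def lap (f : SF) : SF := fun x => ∑ i, pd i (pd i f) x

/-- Curl of a vector field. -/
def curl (v : VF) : VF :=
  ![fun x => pd 1 (v 2) x - pd 2 (v 1) x,
    fun x => pd 2 (v 0) x - pd 0 (v 2) x,
    fun x => pd 0 (v 1) x - pd 1 (v 0) x]

/-- Cross product of vector fields. -/
def cross (a b : VF) : VF :=
  ![fun x => a 1 x * b 2 x - a 2 x * b 1 x,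
    fun x => a 2 x * b 0 x - a 0 x * b 2 x,
    fun x => a 0 x * b 1 x - a 1 x * b 0 x]

/-- Pointwise dot product of vector fields. -/
def vdot (a b : VF) : SF := fun x => ∑ i, a i x * b i x

/-- Pointwise squared Euclidean norm `|a|²` of a vector field. -/
def normSq (a : VF) : SF := fun x => ∑ i, (a i x) ^ 2

/-- Convective derivative `(u·∇)f`. -/
def conv (u : VF) (f : SF) : SF := fun x => ∑ i, u i x * pd i f x

/-- Convective derivative `(u·∇)v` of a vector field, componentwise. -/
def convV (u v : VF) : VF := fun j => conv u (v j)

/-- Symmetric gradient `D(u) = (∇u + ∇uᵀ)/2`, entrywise. -/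
def Dsym (u : VF) (i j : Fin 3) : SF := fun x => (pd j (u i) x + pd i (u j) x) / 2

/-- Squared Frobenius norm `|D(u)|²`. -/
def DabsSq (u : VF) : SF := fun x => ∑ i, ∑ j, (Dsym u i j x) ^ 2

/-- Squared Frobenius norm `|∇v|²` of the Jacobian of a vector field. -/
def gradSq (v : VF) : SF := fun x => ∑ i, ∑ j, (pd j (v i) x) ^ 2

/-- Squared Euclidean norm `|∇f|²` of the gradient of a scalar field. -/
def gradSqS (f : SF) : SF := fun x => ∑ i, (pd i f x) ^ 2

/-- Viscous stress tensor `Ψ(u) = 2μ D(u) + λ (div u) I₃`, entrywise. -/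
def Psi (μ lam : ℝ) (u : VF) (i j : Fin 3) : SF :=
  fun x => 2 * μ * Dsym u i j x + lam * divv u x * (if i = j then 1 else 0)

/-- `div Ψ(u)`, componentwise. -/
def divPsi (μ lam : ℝ) (u : VF) : VF := fun i => fun x => ∑ j, pd j (Psi μ lam u i j) x

/-- The viscous dissipation `Ψ(u):∇u = 2μ|D(u)|² + λ(div u)²`. -/
def PsiColon (μ lam : ℝ) (u : VF) : SF :=
  fun x => ∑ i, ∑ j, Psi μ lam u i j x * pd j (u i) x

/-- Pointwise time derivative of a time-dependent scalar field. -/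
def dt (f : ℝ → SF) : ℝ → SF := fun t x => deriv (fun τ => f τ x) t

/-- Pointwise time derivative of a time-dependent vector field. -/
def dtV (v : ℝ → VF) : ℝ → VF := fun t i x => deriv (fun τ => v τ i x) t

/-- The time interval `[0, T)` for `T ∈ (0, +∞]`. -/
def Dom (T : ℝ≥0∞) : Set ℝ := {t : ℝ | 0 ≤ t ∧ ENNReal.ofReal t < T}

/-- Continuity in time with values in `H^k(𝕋³)` on a time set `D`
(the class `C⁰(D, H^k)`). -/
def ContHs (k : ℕ) (D : Set ℝ) (f : ℝ → SF) : Prop :=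
  ∀ t₀ ∈ D, ∀ ε > (0:ℝ), ∃ δ > (0:ℝ), ∀ t ∈ D, |t - t₀| < δ →
    HsNorm k (fun x => f t x - f t₀ x) < ε

/-- `C⁰(D, H^k)` for vector fields. -/
def ContHsV (k : ℕ) (D : Set ℝ) (v : ℝ → VF) : Prop := ∀ i, ContHs k D fun t => v t i

/-! ### The full compressible MHD system and the electromagnetic fluid system -/

/-- Classical solution of the full compressible MHD system
`∂_tρ + div(ρu) = 0`,
`ρ(∂_tu + u·∇u) + ∇(ρθ) = div Ψ(u) + curl H × H`,
`ρ(∂_tθ + u·∇θ) + ρθ div u = κΔθ + Ψ(u):∇u + |curl H|²`,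
`∂_tH − curl(u×H) = −curl(curl H)`, `div H = 0`
on the torus, on the time set `D` (all physical constants `𝔯 = c_V = σ = μ₀ = 1`). -/
structure IsMHDSol (μ lam κ : ℝ) (D : Set ℝ) (ρ θ : ℝ → SF) (u H : ℝ → VF) : Prop where
  perρ : ∀ t ∈ D, PerS (ρ t)
  perθ : ∀ t ∈ D, PerS (θ t)
  peru : ∀ t ∈ D, PerV (u t)
  perH : ∀ t ∈ D, PerV (H t)
  smρ : ∀ t ∈ D, SmoothS (ρ t)
  smθ : ∀ t ∈ D, SmoothS (θ t)
  smu : ∀ t ∈ D, SmoothV (u t)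
  smH : ∀ t ∈ D, SmoothV (H t)
  tdρ : ∀ (x : Pt), ∀ t ∈ D, DifferentiableAt ℝ (fun τ => ρ τ x) t
  tdθ : ∀ (x : Pt), ∀ t ∈ D, DifferentiableAt ℝ (fun τ => θ τ x) t
  tdu : ∀ (i : Fin 3) (x : Pt), ∀ t ∈ D, DifferentiableAt ℝ (fun τ => u τ i x) t
  tdH : ∀ (i : Fin 3) (x : Pt), ∀ t ∈ D, DifferentiableAt ℝ (fun τ => H τ i x) t
  mass : ∀ t ∈ D, ∀ x, dt ρ t x + divv (fun i y => ρ t y * u t i y) x = 0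
  mom : ∀ t ∈ D, ∀ x, ∀ i,
    ρ t x * (dtV u t i x + convV (u t) (u t) i x) + pd i (fun y => ρ t y * θ t y) x
      = divPsi μ lam (u t) i x + cross (curl (H t)) (H t) i x
  temp : ∀ t ∈ D, ∀ x,
    ρ t x * (dt θ t x + conv (u t) (θ t) x) + ρ t x * θ t x * divv (u t) x
      = κ * lap (θ t) x + PsiColon μ lam (u t) x + normSq (curl (H t)) x
  induction : ∀ t ∈ D, ∀ x, ∀ i,
    dtV H t i x - curl (cross (u t) (H t)) i x = - curl (curl (H t)) i x
  divH : ∀ t ∈ D, ∀ x, divv (H t) x = 0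

/-- Classical solution of the electromagnetic fluid system with dielectric
constant `ε > 0`:
`∂_tρ + div(ρu) = 0`,
`ρ(∂_tu + u·∇u) + ∇(ρθ) = div Ψ(u) + (E + u×H) × H`,
`ρ(∂_tθ + u·∇θ) + ρθ div u = κΔθ + Ψ(u):∇u + |E + u×H|²`,
`ε∂_tE − curl H + E + u×H = 0`,
`∂_tH + curl E = 0`, `div H = 0`
on the torus, on the time set `D`. -/
structure IsEMSol (μ lam κ eps : ℝ) (D : Set ℝ) (ρ θ : ℝ → SF) (u E H : ℝ → VF) : Prop where
  perρ : ∀ t ∈ D, PerS (ρ t)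
  perθ : ∀ t ∈ D, PerS (θ t)
  peru : ∀ t ∈ D, PerV (u t)
  perE : ∀ t ∈ D, PerV (E t)
  perH : ∀ t ∈ D, PerV (H t)
  smρ : ∀ t ∈ D, SmoothS (ρ t)
  smθ : ∀ t ∈ D, SmoothS (θ t)
  smu : ∀ t ∈ D, SmoothV (u t)
  smE : ∀ t ∈ D, SmoothV (E t)
  smH : ∀ t ∈ D, SmoothV (H t)
  tdρ : ∀ (x : Pt), ∀ t ∈ D, DifferentiableAt ℝ (fun τ => ρ τ x) t
  tdθ : ∀ (x : Pt), ∀ t ∈ D, DifferentiableAt ℝ (fun τ => θ τ x) t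
  tdu : ∀ (i : Fin 3) (x : Pt), ∀ t ∈ D, DifferentiableAt ℝ (fun τ => u τ i x) t
  tdE : ∀ (i : Fin 3) (x : Pt), ∀ t ∈ D, DifferentiableAt ℝ (fun τ => E τ i x) t
  tdH : ∀ (i : Fin 3) (x : Pt), ∀ t ∈ D, DifferentiableAt ℝ (fun τ => H τ i x) t
  mass : ∀ t ∈ D, ∀ x, dt ρ t x + divv (fun i y => ρ t y * u t i y) x = 0
  mom : ∀ t ∈ D, ∀ x, ∀ i,
    ρ t x * (dtV u t i x + convV (u t) (u t) i x) + pd i (fun y => ρ t y * θ t y) x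
      = divPsi μ lam (u t) i x
        + cross (fun j y => E t j y + cross (u t) (H t) j y) (H t) i x
  temp : ∀ t ∈ D, ∀ x,
    ρ t x * (dt θ t x + conv (u t) (θ t) x) + ρ t x * θ t x * divv (u t) x
      = κ * lap (θ t) x + PsiColon μ lam (u t) x
        + normSq (fun j y => E t j y + cross (u t) (H t) j y) x
  faraday : ∀ t ∈ D, ∀ x, ∀ i,
    eps * dtV E t i x - curl (H t) i x + E t i x + cross (u t) (H t) i x = 0
  ampere : ∀ t ∈ D, ∀ x, ∀ i, dtV H t i x + curl (E t) i x = 0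
  divH : ∀ t ∈ D, ∀ x, divv (H t) x = 0

/-- The electric field `E⁰ = curl H⁰ − u⁰ × H⁰` induced by the limiting MHD flow. -/
def Efield (u H : VF) : VF := fun i x => curl H i x - cross u H i x

/-- `(N,U,Θ,F,G)` solves the error system obtained by subtracting the full
compressible MHD equations (background solution `(ρ⁰,u⁰,θ⁰,H⁰)`, with induced
electric field `E⁰ = curl H⁰ − u⁰×H⁰`) from the `ε`-dielectric electromagnetic
fluid system: equivalently, `(ρ⁰+N, u⁰+U, θ⁰+Θ, E⁰+F, H⁰+G)` solves the
electromagnetic fluid system. -/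
def IsErrSol (μ lam κ eps : ℝ) (D : Set ℝ) (ρ0 θ0 : ℝ → SF) (u0 H0 : ℝ → VF)
    (N Θ : ℝ → SF) (U F G : ℝ → VF) : Prop :=
  IsEMSol μ lam κ eps D
    (fun t x => ρ0 t x + N t x) (fun t x => θ0 t x + Θ t x)
    (fun t i x => u0 t i x + U t i x)
    (fun t i x => Efield (u0 t) (H0 t) i x + F t i x)
    (fun t i x => H0 t i x + G t i x)

/-- The error-system energy `‖ℰ‖_s = ‖(N,U,Θ,G)‖_s` (sum of the `H^s` norms). -/
def Enorm (s : ℕ) (N Θ : SF) (U G : VF) : ℝ :=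
  HsNorm s N + HsNormV s U + HsNorm s Θ + HsNormV s G

/-- The squared `ε`-weighted energy `⫴ℰ⫴²_s = ‖ℰ‖²_s + ε‖F‖²_s`. -/
def EnormSq (s : ℕ) (eps : ℝ) (N Θ : SF) (U F G : VF) : ℝ :=
  (Enorm s N Θ U G) ^ 2 + eps * (HsNormV s F) ^ 2

end

/-!
The estimate rests on two properties of the spaces `Hⁿ` of a `d`-dimensional box.

*Multiplication.* `Hᵐ · Hᵏ ⊆ Hⁿ` when `n ≤ m`, `n ≤ k` and `n + d ≤ m + k`. Leibniz' rule reduces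
this to `n = 0`. There, split the coordinates into a set `S` of at most `m` and a complement of at
most `k`. The one-dimensional Sobolev inequality in each coordinate of `S` bounds `f²` by an
integral over those coordinates, at the cost of `|S|` derivatives; bound `g²` in the same way by an
integral over the remaining ones. The two bounds have no coordinate in common, so the integral of
their product over the box factors.

*Division.* If `ρ ≥ c > 0`, then `ρ ∂ᵢu = ∂ᵢ(ρu) - (∂ᵢρ)u` exchanges a derivative of `u` for one of
`ρu`, up to a term of lower order in `u`. Every derivative costs one factor `1 + ‖ρ‖²`, so that
`‖u‖²_{Hⁿ} ≲ ‖ρu‖²_{Hⁿ} (1 + ‖ρ‖²)ⁿ`.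

With `u = |F|²/(N + ρ⁰)` this gives `‖∂^α u‖² ≲ ‖F‖⁴ M`, where `M = 1 + ‖(N,F)‖^{2(s+1)}`. Young's
inequality with weight proportional to `γ / M` moves the factor `M` onto `‖∂^αΘ‖²`.
-/

open scoped ContDiff

section PartialDeriv

variable {ι : Type*} [Finite ι] [DecidableEq ι] {f g : (ι → ℝ) → ℝ}

/-- The partial derivative `∂ᵢ f` of a function on `ℝ^ι`: the dimension-free form of `pd`. -/
noncomputable def partialDeriv (i : ι) (f : (ι → ℝ) → ℝ) : (ι → ℝ) → ℝ :=
  fun x => fderiv ℝ f x (Pi.single i 1)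

theorem partialDeriv_add (hf : Differentiable ℝ f) (hg : Differentiable ℝ g) (i : ι) :
    partialDeriv i (f + g) = partialDeriv i f + partialDeriv i g := by
  cases nonempty_fintype ι
  funext x
  simp [partialDeriv, fderiv_add (hf x) (hg x)]

theorem partialDeriv_neg (f : (ι → ℝ) → ℝ) (i : ι) : partialDeriv i (-f) = -partialDeriv i f := by
  cases nonempty_fintype ι
  funext x
  simp [partialDeriv, fderiv_neg]

theorem partialDeriv_mul (hf : Differentiable ℝ f) (hg : Differentiable ℝ g) (i : ι) :
    partialDeriv i (f * g) = partialDeriv i f * g + f * partialDeriv i g := by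
  cases nonempty_fintype ι
  funext x
  simp [partialDeriv, fderiv_mul (hf x) (hg x)]
  ring

end PartialDeriv

section PartialDerivSmooth

variable {ι : Type*} [Fintype ι] [DecidableEq ι] {f : (ι → ℝ) → ℝ}

theorem contDiff_partialDeriv (hf : ContDiff ℝ ∞ f) (i : ι) : ContDiff ℝ ∞ (partialDeriv i f) :=
  (hf.fderiv_right le_rfl).clm_apply contDiff_const

theorem partialDeriv_comm (hf : ContDiff ℝ 2 f) (i j : ι) :
    partialDeriv i (partialDeriv j f) = partialDeriv j (partialDeriv i f) := by
  funext x
  have hdiff : DifferentiableAt ℝ (fderiv ℝ f) x :=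
    (hf.fderiv_right (m := 1) (by norm_num)).differentiable (by norm_num) x
  have iterate_eq (k l : ι) : partialDeriv k (partialDeriv l f) x =
      fderiv ℝ (fderiv ℝ f) x (Pi.single k 1) (Pi.single l 1) := by
    unfold partialDeriv
    rw [fderiv_clm_apply hdiff (differentiableAt_const _)]
    simp
  rw [iterate_eq, iterate_eq]
  exact hf.contDiffAt.isSymmSndFDerivAt (by simp) _ _

end PartialDerivSmooth

section SobolevDensity

variable {ι : Type*} [Fintype ι] [DecidableEq ι] {f g : (ι → ℝ) → ℝ}

/-- The sum of `|∂_w f|²` over iterated partial derivatives `∂_w` of order at most `n`. Each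
`∂_w` occurs once for every way of reaching it in `n` steps, a step being a differentiation or a
pause; the recursion is what makes inductions on the order immediate. -/
noncomputable def sobolevDensity : ℕ → ((ι → ℝ) → ℝ) → (ι → ℝ) → ℝ
  | 0, f, x => f x ^ 2
  | n + 1, f, x => sobolevDensity n f x + ∑ i, sobolevDensity n (partialDeriv i f) x

theorem sobolevDensity_nonneg (n : ℕ) (f : (ι → ℝ) → ℝ) (x : ι → ℝ) :
    0 ≤ sobolevDensity n f x := by
  induction n generalizing f with
  | zero => exact sq_nonneg _
  | succ n ih => exact add_nonneg (ih f) (Finset.sum_nonneg fun i _ => ih _)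

theorem continuous_sobolevDensity (hf : ContDiff ℝ ∞ f) (n : ℕ) :
    Continuous (sobolevDensity n f) := by
  induction n generalizing f with
  | zero => exact hf.continuous.pow 2
  | succ n ih =>
    exact (ih hf).add (continuous_finsetSum _ fun i _ => ih (contDiff_partialDeriv hf i))

theorem sobolevDensity_add_le (hf : ContDiff ℝ ∞ f) (hg : ContDiff ℝ ∞ g) (n : ℕ) (x : ι → ℝ) :
    sobolevDensity n (f + g) x ≤ 2 * sobolevDensity n f x + 2 * sobolevDensity n g x := by
  induction n generalizing f g with
  | zero =>
    simp only [sobolevDensity, Pi.add_apply]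
    linarith [add_sq_le (a := f x) (b := g x)]
  | succ n ih =>
    have hsum : ∑ i, sobolevDensity n (partialDeriv i (f + g)) x ≤
        2 * ∑ i, sobolevDensity n (partialDeriv i f) x +
          2 * ∑ i, sobolevDensity n (partialDeriv i g) x := by
      rw [Finset.mul_sum, Finset.mul_sum, ← Finset.sum_add_distrib]
      refine Finset.sum_le_sum fun i _ => ?_
      rw [partialDeriv_add (hf.differentiable (by simp)) (hg.differentiable (by simp))]
      exact ih (contDiff_partialDeriv hf i) (contDiff_partialDeriv hg i)
    simp only [sobolevDensity]
    linarith [ih hf hg]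

theorem sobolevDensity_neg (n : ℕ) (f : (ι → ℝ) → ℝ) :
    sobolevDensity n (-f) = sobolevDensity n f := by
  funext x
  induction n generalizing f with
  | zero => simp [sobolevDensity]
  | succ n ih => simp [sobolevDensity, partialDeriv_neg, ih]

end SobolevDensity

section SobolevSq

variable {ι : Type*} [Fintype ι] [DecidableEq ι] {f g : (ι → ℝ) → ℝ} {Ω : Set (ι → ℝ)}

/-- The square of the `Hⁿ(Ω)` norm, up to the multiplicities counted by `sobolevDensity`. -/
noncomputable def sobolevSq (Ω : Set (ι → ℝ)) (n : ℕ) (f : (ι → ℝ) → ℝ) : ℝ :=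
  ∫ x in Ω, sobolevDensity n f x

theorem sobolevSq_nonneg (Ω : Set (ι → ℝ)) (n : ℕ) (f : (ι → ℝ) → ℝ) : 0 ≤ sobolevSq Ω n f :=
  integral_nonneg fun x => sobolevDensity_nonneg n f x

theorem sobolevSq_neg (Ω : Set (ι → ℝ)) (n : ℕ) (f : (ι → ℝ) → ℝ) :
    sobolevSq Ω n (-f) = sobolevSq Ω n f := by
  simp only [sobolevSq, sobolevDensity_neg]

theorem integrableOn_sobolevDensity (hΩ : IsCompact Ω) (hf : ContDiff ℝ ∞ f) (n : ℕ) :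
    IntegrableOn (sobolevDensity n f) Ω :=
  (continuous_sobolevDensity hf n).continuousOn.integrableOn_compact hΩ

theorem sobolevSq_succ (hΩ : IsCompact Ω) (hf : ContDiff ℝ ∞ f) (n : ℕ) :
    sobolevSq Ω (n + 1) f = sobolevSq Ω n f + ∑ i, sobolevSq Ω n (partialDeriv i f) := by
  have hint (i : ι) : IntegrableOn (sobolevDensity n (partialDeriv i f)) Ω :=
    integrableOn_sobolevDensity hΩ (contDiff_partialDeriv hf i) n
  simp only [sobolevSq, sobolevDensity]
  rw [integral_add (integrableOn_sobolevDensity hΩ hf n) (integrable_finsetSum _ fun i _ => hint i),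
    integral_finsetSum _ fun i _ => hint i]

theorem sobolevSq_add_le (hΩ : IsCompact Ω) (hf : ContDiff ℝ ∞ f) (hg : ContDiff ℝ ∞ g) (n : ℕ) :
    sobolevSq Ω n (f + g) ≤ 2 * sobolevSq Ω n f + 2 * sobolevSq Ω n g := by
  have hfint := (integrableOn_sobolevDensity hΩ hf n).const_mul 2
  have hgint := (integrableOn_sobolevDensity hΩ hg n).const_mul 2
  simp only [sobolevSq]
  rw [← integral_const_mul, ← integral_const_mul, ← integral_add hfint hgint]
  exact integral_mono (integrableOn_sobolevDensity hΩ (hf.add hg) n) (hfint.add hgint)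
    (sobolevDensity_add_le hf hg n)

theorem sobolevSq_sub_le (hΩ : IsCompact Ω) (hf : ContDiff ℝ ∞ f) (hg : ContDiff ℝ ∞ g) (n : ℕ) :
    sobolevSq Ω n (f - g) ≤ 2 * sobolevSq Ω n f + 2 * sobolevSq Ω n g := by
  rw [sub_eq_add_neg, ← sobolevSq_neg Ω n g]
  exact sobolevSq_add_le hΩ hf hg.neg n

theorem sum_sobolevSq_partialDeriv_le (hΩ : IsCompact Ω) (hf : ContDiff ℝ ∞ f) (n : ℕ) :
    ∑ i, sobolevSq Ω n (partialDeriv i f) ≤ sobolevSq Ω (n + 1) f := by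
  rw [sobolevSq_succ hΩ hf]
  exact le_add_of_nonneg_left (sobolevSq_nonneg Ω n f)

theorem sobolevSq_partialDeriv_le (hΩ : IsCompact Ω) (hf : ContDiff ℝ ∞ f) (n : ℕ) (i : ι) :
    sobolevSq Ω n (partialDeriv i f) ≤ sobolevSq Ω (n + 1) f :=
  (Finset.single_le_sum (f := fun i => sobolevSq Ω n (partialDeriv i f))
    (fun _ _ => sobolevSq_nonneg ..) (Finset.mem_univ i)).trans
    (sum_sobolevSq_partialDeriv_le hΩ hf n)

theorem sobolevSq_succ_mul_le (hΩ : IsCompact Ω) (hf : ContDiff ℝ ∞ f) (hg : ContDiff ℝ ∞ g)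
    (n : ℕ) :
    sobolevSq Ω (n + 1) (f * g) ≤ sobolevSq Ω n (f * g) +
      2 * (∑ i, sobolevSq Ω n (partialDeriv i f * g) +
        ∑ i, sobolevSq Ω n (f * partialDeriv i g)) := by
  rw [sobolevSq_succ (f := f * g) hΩ (hf.mul hg), ← Finset.sum_add_distrib, Finset.mul_sum]
  gcongr with i
  rw [partialDeriv_mul (hf.differentiable (by simp)) (hg.differentiable (by simp)), mul_add]
  exact sobolevSq_add_le hΩ ((contDiff_partialDeriv hf i).mul hg)
    (hf.mul (contDiff_partialDeriv hg i)) n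

theorem sobolevSq_mono (hΩ : IsCompact Ω) (hf : ContDiff ℝ ∞ f) {m n : ℕ} (hmn : m ≤ n) :
    sobolevSq Ω m f ≤ sobolevSq Ω n f := by
  refine monotone_nat_of_le_succ (f := fun n => sobolevSq Ω n f) (fun n => ?_) hmn
  rw [sobolevSq_succ hΩ hf]
  exact le_add_of_nonneg_right (Finset.sum_nonneg fun i _ => sobolevSq_nonneg ..)

end SobolevSq

section Fubini

variable {ι : Type*} [DecidableEq ι] {X : ι → Type*} [∀ i, MeasurableSpace (X i)]
  (μ : ∀ i, Measure (X i)) {F G : (∀ i, X i) → ℝ≥0∞}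

theorem lmarginal_mul_lmarginal (S : Finset ι) (hF : Measurable F) (G : (∀ i, X i) → ℝ≥0∞) :
    ∫⋯∫⁻_S, F * ∫⋯∫⁻_S, G ∂μ ∂μ = (∫⋯∫⁻_S, F ∂μ) * ∫⋯∫⁻_S, G ∂μ := by
  funext x
  have hconst (z : ∀ i : S, X i) :
      (∫⋯∫⁻_S, G ∂μ) (Function.updateFinset x S z) = (∫⋯∫⁻_S, G ∂μ) x :=
    lmarginal_congr μ G fun i hi => by simp [Function.updateFinset, hi]
  rw [lmarginal]
  simp only [Pi.mul_apply, hconst]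
  exact lintegral_mul_const _ (hF.comp measurable_updateFinset)

variable [Fintype ι] [∀ i, SigmaFinite (μ i)]

theorem lmarginal_lmarginal_compl (S : Finset ι) (hF : Measurable F) :
    ∫⋯∫⁻_S, ∫⋯∫⁻_Sᶜ, F ∂μ ∂μ = fun _ => ∫⁻ x, F x ∂Measure.pi μ := by
  rw [← lmarginal_union μ F hF disjoint_compl_right, Finset.union_compl, lmarginal_univ]

-- The first factor depends only on the coordinates outside `S`, the second only on those in `S`.
theorem lintegral_lmarginal_mul_lmarginal_compl (S : Finset ι) (hF : Measurable F)
    (hG : Measurable G) :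
    ∫⁻ x, (∫⋯∫⁻_S, F ∂μ) x * (∫⋯∫⁻_Sᶜ, G ∂μ) x ∂Measure.pi μ =
      (∫⁻ x, F x ∂Measure.pi μ) * ∫⁻ x, G x ∂Measure.pi μ := by
  have hmul : Measurable ((∫⋯∫⁻_S, F ∂μ) * ∫⋯∫⁻_Sᶜ, G ∂μ) := (hF.lmarginal μ).mul (hG.lmarginal μ)
  have hinner : ∫⋯∫⁻_Sᶜ, (∫⋯∫⁻_S, F ∂μ) ∂μ = fun _ => ∫⁻ x, F x ∂Measure.pi μ := by
    simpa using lmarginal_lmarginal_compl μ Sᶜ hF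
  rcases isEmpty_or_nonempty (∀ i, X i) with _ | ⟨⟨x⟩⟩
  · simp [lintegral_of_isEmpty]
  calc ∫⁻ x, (∫⋯∫⁻_S, F ∂μ) x * (∫⋯∫⁻_Sᶜ, G ∂μ) x ∂Measure.pi μ
    _ = (∫⋯∫⁻_S, ∫⋯∫⁻_Sᶜ, (∫⋯∫⁻_S, F ∂μ) * ∫⋯∫⁻_Sᶜ, G ∂μ ∂μ ∂μ) x :=
      congrFun (lmarginal_lmarginal_compl μ S hmul).symm x
    _ = (∫⋯∫⁻_S, (fun y => (∫⁻ x, F x ∂Measure.pi μ) * (∫⋯∫⁻_Sᶜ, G ∂μ) y) ∂μ) x := by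
      rw [lmarginal_mul_lmarginal μ Sᶜ (hF.lmarginal μ) G, hinner]
      rfl
    _ = (∫⁻ x, F x ∂Measure.pi μ) * (∫⋯∫⁻_S, ∫⋯∫⁻_Sᶜ, G ∂μ ∂μ) x :=
      lintegral_const_mul _ ((hG.lmarginal μ).comp measurable_updateFinset)
    _ = (∫⁻ x, F x ∂Measure.pi μ) * ∫⁻ x, G x ∂Measure.pi μ := by
      rw [lmarginal_lmarginal_compl μ S hG]

end Fubini

section SobolevInequality

theorem sq_sub_sq_le_setIntegral_Icc {u v : ℝ → ℝ} (hu : ∀ r, HasDerivAt u (v r) r)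
    (hv : Continuous v) {a b r t : ℝ} (hr : r ∈ Set.Icc a b) (ht : t ∈ Set.Icc a b) :
    u t ^ 2 - u r ^ 2 ≤ ∫ x in Set.Icc a b, (u x ^ 2 + v x ^ 2) := by
  have hu_cont : Continuous u := continuous_iff_continuousAt.2 fun x => (hu x).continuousAt
  have hint {w : ℝ → ℝ} (hw : Continuous w) : IntegrableOn w (Set.Icc a b) :=
    hw.continuousOn.integrableOn_compact isCompact_Icc
  have hftc : ∫ x in r..t, 2 * u x * v x = u t ^ 2 - u r ^ 2 :=
    intervalIntegral.integral_eq_sub_of_hasDerivAt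
      (fun x _ => by simpa using (hu x).pow 2)
      (Continuous.intervalIntegrable (by fun_prop) _ _)
  calc u t ^ 2 - u r ^ 2 ≤ ‖∫ x in r..t, 2 * u x * v x‖ := hftc ▸ le_abs_self _
    _ ≤ ∫ x in Set.uIoc r t, ‖2 * u x * v x‖ :=
      intervalIntegral.norm_integral_le_integral_norm_uIoc
    _ ≤ ∫ x in Set.Icc a b, ‖2 * u x * v x‖ :=
      setIntegral_mono_set (hint (by fun_prop)) (Filter.Eventually.of_forall fun _ => norm_nonneg _)
        (Set.uIoc_subset_uIcc.trans (Set.uIcc_subset_Icc hr ht)).eventuallyLE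
    _ ≤ ∫ x in Set.Icc a b, (u x ^ 2 + v x ^ 2) :=
      setIntegral_mono (hint (by fun_prop)) (hint (by fun_prop)) fun x => by
        rw [Real.norm_eq_abs, abs_le]
        constructor <;> nlinarith [sq_nonneg (u x + v x), sq_nonneg (u x - v x)]

theorem sq_le_setIntegral_Icc {u v : ℝ → ℝ} (hu : ∀ r, HasDerivAt u (v r) r)
    (hv : Continuous v) {a b t : ℝ} (hab : a < b) (ht : t ∈ Set.Icc a b) :
    u t ^ 2 ≤ ((b - a)⁻¹ + 1) * ∫ x in Set.Icc a b, (u x ^ 2 + v x ^ 2) := by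
  have hu_cont : Continuous u := continuous_iff_continuousAt.2 fun x => (hu x).continuousAt
  have hint {w : ℝ → ℝ} (hw : Continuous w) : IntegrableOn w (Set.Icc a b) :=
    hw.continuousOn.integrableOn_compact isCompact_Icc
  obtain ⟨r, hr, hr_le⟩ : ∃ r ∈ Set.Icc a b, u r ^ 2 ≤ ⨍ x in Set.Icc a b, u x ^ 2 :=
    exists_le_setAverage (by simp [hab]) (by simp) (hint (by fun_prop))
  rw [setAverage_eq, Real.volume_real_Icc_of_le hab.le, smul_eq_mul] at hr_le
  have hsq_le : ∫ x in Set.Icc a b, u x ^ 2 ≤ ∫ x in Set.Icc a b, (u x ^ 2 + v x ^ 2) :=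
    setIntegral_mono (hint (by fun_prop)) (hint (by fun_prop)) fun x =>
      le_add_of_nonneg_right (sq_nonneg (v x))
  have hr_le' := hr_le.trans
    (mul_le_mul_of_nonneg_left hsq_le (inv_nonneg.2 (sub_nonneg.2 hab.le)))
  linarith [sq_sub_sq_le_setIntegral_Icc hu hv hr ht]

variable {ι : Type*} [Fintype ι] [DecidableEq ι] {f g : (ι → ℝ) → ℝ} {a b : ι → ℝ}

theorem ofReal_sq_le_lintegral_update (hf : ContDiff ℝ 1 f) {i : ι} (hab : a i < b i)
    {x : ι → ℝ} (hx : x i ∈ Set.Icc (a i) (b i)) :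
    ENNReal.ofReal (f x ^ 2) ≤ ENNReal.ofReal ((b i - a i)⁻¹ + 1) *
      ∫⁻ r in Set.Icc (a i) (b i), ENNReal.ofReal
        (f (Function.update x i r) ^ 2 + partialDeriv i f (Function.update x i r) ^ 2) := by
  have hderiv (r : ℝ) : HasDerivAt (fun r => f (Function.update x i r))
      (partialDeriv i f (Function.update x i r)) r :=
    (hf.differentiable one_ne_zero _).hasFDerivAt.comp_hasDerivAt r (hasDerivAt_update x i r)
  have hupdate : Continuous (Function.update x i) := continuous_const.update i continuous_id
  have hderiv_cont : Continuous fun r => partialDeriv i f (Function.update x i r) :=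
    ((hf.continuous_fderiv one_ne_zero).clm_apply continuous_const).comp hupdate
  have hint : IntegrableOn (fun r => f (Function.update x i r) ^ 2 +
      partialDeriv i f (Function.update x i r) ^ 2) (Set.Icc (a i) (b i)) :=
    (((hf.continuous.comp hupdate).pow 2).add (hderiv_cont.pow 2)).continuousOn.integrableOn_compact
      isCompact_Icc
  rw [← ofReal_integral_eq_lintegral_ofReal hint
      (Filter.Eventually.of_forall fun r => by positivity),
    ← ENNReal.ofReal_mul (add_nonneg (inv_nonneg.2 (sub_nonneg.2 hab.le)) zero_le_one)]
  refine ENNReal.ofReal_le_ofReal ?_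
  simpa using sq_le_setIntegral_Icc hderiv hderiv_cont hab hx

theorem lmarginal_sobolevDensity_add_le (μ : ι → Measure ℝ) (S : Finset ι) (n : ℕ) (i : ι)
    (f : (ι → ℝ) → ℝ) (x : ι → ℝ) :
    (∫⋯∫⁻_S, (fun y => ENNReal.ofReal (sobolevDensity n f y)) ∂μ) x +
        (∫⋯∫⁻_S, (fun y => ENNReal.ofReal (sobolevDensity n (partialDeriv i f) y)) ∂μ) x ≤
      (∫⋯∫⁻_S, (fun y => ENNReal.ofReal (sobolevDensity (n + 1) f y)) ∂μ) x := by
  refine (le_lintegral_add _ _).trans (lintegral_mono fun y => ?_)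
  rw [← ENNReal.ofReal_add (sobolevDensity_nonneg ..) (sobolevDensity_nonneg ..)]
  refine ENNReal.ofReal_le_ofReal (add_le_add_right ?_ _)
  exact Finset.single_le_sum (f := fun i => sobolevDensity n (partialDeriv i f) _)
    (fun _ _ => sobolevDensity_nonneg ..) (Finset.mem_univ i)

theorem ofReal_sq_le_lmarginal_sobolevDensity (hab : ∀ i, a i < b i) (S : Finset ι)
    (hf : ContDiff ℝ ∞ f) {x : ι → ℝ} (hx : ∀ i ∈ S, x i ∈ Set.Icc (a i) (b i)) :
    ENNReal.ofReal (f x ^ 2) ≤ (∏ i ∈ S, ENNReal.ofReal ((b i - a i)⁻¹ + 1)) *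
      (∫⋯∫⁻_S, (fun y => ENNReal.ofReal (sobolevDensity S.card f y))
        ∂fun i => volume.restrict (Set.Icc (a i) (b i))) x := by
  set μ : ι → Measure ℝ := fun i => volume.restrict (Set.Icc (a i) (b i))
  set K : ι → ℝ≥0∞ := fun i => ENNReal.ofReal ((b i - a i)⁻¹ + 1)
  induction S using Finset.induction_on generalizing f x with
  | empty => simp [sobolevDensity]
  | insert i S hi ih =>
    have hmeas : Measurable fun y => ENNReal.ofReal (sobolevDensity (S.card + 1) f y) :=
      (continuous_sobolevDensity hf _).measurable.ennreal_ofReal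
    have hx_update (r : ℝ) (j : ι) (hj : j ∈ S) :
        Function.update x i r j ∈ Set.Icc (a j) (b j) := by
      rw [Function.update_of_ne (ne_of_mem_of_not_mem hj hi)]
      exact hx j (Finset.mem_insert_of_mem hj)
    rw [lmarginal_insert _ (Finset.card_insert_of_notMem hi ▸ hmeas) hi, Finset.prod_insert hi,
      Finset.card_insert_of_notMem hi]
    calc ENNReal.ofReal (f x ^ 2)
      _ ≤ K i * ∫⁻ r, ENNReal.ofReal (f (Function.update x i r) ^ 2 +
            partialDeriv i f (Function.update x i r) ^ 2) ∂μ i :=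
        ofReal_sq_le_lintegral_update (hf.of_le (by norm_cast)) (hab i)
          (hx i (Finset.mem_insert_self i S))
      _ ≤ K i * ∫⁻ r, (∏ j ∈ S, K j) *
            (∫⋯∫⁻_S, (fun y => ENNReal.ofReal (sobolevDensity (S.card + 1) f y)) ∂μ)
              (Function.update x i r) ∂μ i := by
        gcongr with r
        rw [ENNReal.ofReal_add (sq_nonneg _) (sq_nonneg _)]
        refine (add_le_add (ih hf (hx_update r))
          (ih (contDiff_partialDeriv hf i) (hx_update r))).trans ?_
        rw [← mul_add]
        gcongr
        exact lmarginal_sobolevDensity_add_le μ S S.card i f _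
      _ = K i * ((∏ j ∈ S, K j) * ∫⁻ r,
            (∫⋯∫⁻_S, (fun y => ENNReal.ofReal (sobolevDensity (S.card + 1) f y)) ∂μ)
              (Function.update x i r) ∂μ i) :=
        congrArg (K i * ·) (lintegral_const_mul _ ((hmeas.lmarginal μ).comp (measurable_update x)))
      _ = _ := (mul_assoc _ _ _).symm

theorem ofReal_sobolevSq (hf : ContDiff ℝ ∞ f) {Ω : Set (ι → ℝ)} (hΩ : IsCompact Ω) (n : ℕ) :
    ENNReal.ofReal (sobolevSq Ω n f) = ∫⁻ x in Ω, ENNReal.ofReal (sobolevDensity n f x) :=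
  ofReal_integral_eq_lintegral_ofReal (integrableOn_sobolevDensity hΩ hf n)
    (Filter.Eventually.of_forall (sobolevDensity_nonneg n f))

theorem ofReal_mul_sq_le_lmarginal_mul_lmarginal_compl (hab : ∀ i, a i < b i) (S : Finset ι)
    (hf : ContDiff ℝ ∞ f) (hg : ContDiff ℝ ∞ g) {x : ι → ℝ} (hx : x ∈ Set.Icc a b) :
    ENNReal.ofReal ((f x * g x) ^ 2) ≤ (∏ i, ENNReal.ofReal ((b i - a i)⁻¹ + 1)) *
      ((∫⋯∫⁻_S, (fun y => ENNReal.ofReal (sobolevDensity S.card f y))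
          ∂fun i => volume.restrict (Set.Icc (a i) (b i))) x *
        (∫⋯∫⁻_Sᶜ, (fun y => ENNReal.ofReal (sobolevDensity Sᶜ.card g y))
          ∂fun i => volume.restrict (Set.Icc (a i) (b i))) x) := by
  have hx_mem (i : ι) : x i ∈ Set.Icc (a i) (b i) := ⟨hx.1 i, hx.2 i⟩
  rw [mul_pow, ENNReal.ofReal_mul (sq_nonneg _), ← Finset.prod_mul_prod_compl S, mul_mul_mul_comm]
  exact mul_le_mul' (ofReal_sq_le_lmarginal_sobolevDensity hab S hf fun i _ => hx_mem i)
    (ofReal_sq_le_lmarginal_sobolevDensity hab Sᶜ hg fun i _ => hx_mem i)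

theorem sobolevSq_zero_mul_le (hab : ∀ i, a i < b i) (S : Finset ι) (hf : ContDiff ℝ ∞ f)
    (hg : ContDiff ℝ ∞ g) :
    sobolevSq (Set.Icc a b) 0 (f * g) ≤ (∏ i, ((b i - a i)⁻¹ + 1)) *
      (sobolevSq (Set.Icc a b) S.card f * sobolevSq (Set.Icc a b) Sᶜ.card g) := by
  have hK (i : ι) : 0 ≤ (b i - a i)⁻¹ + 1 :=
    add_nonneg (inv_nonneg.2 (sub_nonneg.2 (hab i).le)) zero_le_one
  have hmeas {h : (ι → ℝ) → ℝ} (hh : ContDiff ℝ ∞ h) (n : ℕ) :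
      Measurable fun x => ENNReal.ofReal (sobolevDensity n h x) :=
    (continuous_sobolevDensity hh n).measurable.ennreal_ofReal
  have hnonneg := mul_nonneg (sobolevSq_nonneg (Set.Icc a b) S.card f)
    (sobolevSq_nonneg (Set.Icc a b) Sᶜ.card g)
  rw [← ENNReal.ofReal_le_ofReal_iff (mul_nonneg (Finset.prod_nonneg fun i _ => hK i) hnonneg),
    ENNReal.ofReal_mul (Finset.prod_nonneg fun i _ => hK i),
    ENNReal.ofReal_prod_of_nonneg fun i _ => hK i, ENNReal.ofReal_mul (sobolevSq_nonneg ..),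
    ofReal_sobolevSq (f := f * g) (hf.mul hg) isCompact_Icc, ofReal_sobolevSq hf isCompact_Icc,
    ofReal_sobolevSq hg isCompact_Icc]
  refine (setLIntegral_mono' measurableSet_Icc fun x hx =>
    ofReal_mul_sq_le_lmarginal_mul_lmarginal_compl hab S hf hg hx).trans_eq ?_
  rw [lintegral_const_mul' _ _ (ENNReal.prod_ne_top fun i _ => ENNReal.ofReal_ne_top),
    ← Set.pi_univ_Icc, volume_pi, Measure.restrict_pi_pi,
    lintegral_lmarginal_mul_lmarginal_compl _ S (hmeas hf _) (hmeas hg _)]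

theorem exists_sobolevSq_zero_mul_le (hab : ∀ i, a i < b i) {m k : ℕ}
    (hmk : Fintype.card ι ≤ m + k) :
    ∃ C > 0, ∀ f g : (ι → ℝ) → ℝ, ContDiff ℝ ∞ f → ContDiff ℝ ∞ g →
      sobolevSq (Set.Icc a b) 0 (f * g) ≤
        C * (sobolevSq (Set.Icc a b) m f * sobolevSq (Set.Icc a b) k g) := by
  obtain ⟨S, -, hS⟩ := Finset.exists_subset_card_eq
    (s := (Finset.univ : Finset ι)) (n := min m (Fintype.card ι)) (by simp)
  have hSm : S.card ≤ m := hS.trans_le (min_le_left _ _)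
  have hSk : Sᶜ.card ≤ k := by rw [Finset.card_compl]; omega
  have hK (i : ι) : 0 < (b i - a i)⁻¹ + 1 := add_pos (inv_pos.2 (sub_pos.2 (hab i))) one_pos
  refine ⟨∏ i, ((b i - a i)⁻¹ + 1), Finset.prod_pos fun i _ => hK i, fun f g hf hg => ?_⟩
  refine (sobolevSq_zero_mul_le hab S hf hg).trans ?_
  refine mul_le_mul_of_nonneg_left ?_ (Finset.prod_pos fun i _ => hK i).le
  exact mul_le_mul (sobolevSq_mono isCompact_Icc hf hSm) (sobolevSq_mono isCompact_Icc hg hSk)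
    (sobolevSq_nonneg ..) (sobolevSq_nonneg ..)

end SobolevInequality

section SobolevAlgebra

variable {ι : Type*} [Fintype ι] [DecidableEq ι] {a b : ι → ℝ}

theorem exists_sobolevSq_mul_le (hab : ∀ i, a i < b i) {n m k : ℕ} (hnm : n ≤ m) (hnk : n ≤ k)
    (hmk : n + Fintype.card ι ≤ m + k) :
    ∃ C > 0, ∀ f g : (ι → ℝ) → ℝ, ContDiff ℝ ∞ f → ContDiff ℝ ∞ g →
      sobolevSq (Set.Icc a b) n (f * g) ≤
        C * (sobolevSq (Set.Icc a b) m f * sobolevSq (Set.Icc a b) k g) := by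
  induction n generalizing m k with
  | zero => exact exists_sobolevSq_zero_mul_le hab (by omega)
  | succ n ih =>
    obtain ⟨m, rfl⟩ := Nat.exists_eq_add_of_lt hnm
    obtain ⟨k, rfl⟩ := Nat.exists_eq_add_of_lt hnk
    obtain ⟨C₀, hC₀, hle₀⟩ := @ih (n + m + 1) (n + k + 1) (by omega) (by omega) (by omega)
    obtain ⟨C₁, hC₁, hle₁⟩ := @ih (n + m) (n + k + 1) (by omega) (by omega) (by omega)
    obtain ⟨C₂, hC₂, hle₂⟩ := @ih (n + m + 1) (n + k) (by omega) (by omega) (by omega)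
    refine ⟨C₀ + 2 * C₁ + 2 * C₂, by positivity, fun f g hf hg => ?_⟩
    set P := sobolevSq (Set.Icc a b) (n + m + 1) f
    set Q := sobolevSq (Set.Icc a b) (n + k + 1) g
    calc sobolevSq (Set.Icc a b) (n + 1) (f * g)
      _ ≤ sobolevSq (Set.Icc a b) n (f * g) +
            2 * (∑ i, sobolevSq (Set.Icc a b) n (partialDeriv i f * g) +
              ∑ i, sobolevSq (Set.Icc a b) n (f * partialDeriv i g)) :=
        sobolevSq_succ_mul_le isCompact_Icc hf hg n
      _ ≤ C₀ * (P * Q) +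
            2 * (∑ i, C₁ * (sobolevSq (Set.Icc a b) (n + m) (partialDeriv i f) * Q) +
              ∑ i, C₂ * (P * sobolevSq (Set.Icc a b) (n + k) (partialDeriv i g))) := by
        gcongr with i _ i _
        exacts [hle₀ f g hf hg, hle₁ _ _ (contDiff_partialDeriv hf i) hg,
          hle₂ _ _ hf (contDiff_partialDeriv hg i)]
      _ ≤ C₀ * (P * Q) + 2 * (C₁ * (P * Q) + C₂ * (P * Q)) := by
        simp only [← Finset.mul_sum, ← Finset.sum_mul]
        gcongr
        exacts [sobolevSq_nonneg .., sum_sobolevSq_partialDeriv_le isCompact_Icc hf _,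
          sobolevSq_nonneg .., sum_sobolevSq_partialDeriv_le isCompact_Icc hg _]
      _ = (C₀ + 2 * C₁ + 2 * C₂) * (P * Q) := by ring

theorem sobolevSq_zero_le_mul_left {ρ u : (ι → ℝ) → ℝ} {Ω : Set (ι → ℝ)} (hΩ : IsCompact Ω) {c : ℝ}
    (hc : 0 < c) (hρ : ContDiff ℝ ∞ ρ) (hu : ContDiff ℝ ∞ u) (hcρ : ∀ x ∈ Ω, c ≤ ρ x) :
    sobolevSq Ω 0 u ≤ (c ^ 2)⁻¹ * sobolevSq Ω 0 (ρ * u) := by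
  rw [le_inv_mul_iff₀ (by positivity), sobolevSq, sobolevSq, ← integral_const_mul]
  refine setIntegral_mono_on ((integrableOn_sobolevDensity hΩ hu 0).const_mul _)
    (integrableOn_sobolevDensity hΩ (hρ.mul hu) 0) hΩ.measurableSet fun x hx => ?_
  simp only [sobolevDensity, Pi.mul_apply, mul_pow]
  gcongr
  exact hcρ x hx

theorem exists_sum_sobolevSq_mul_partialDeriv_le (hab : ∀ i, a i < b i) {n t : ℕ} (hnt : n ≤ t)
    (ht : Fintype.card ι ≤ t) :
    ∃ C > 0, ∀ ρ u : (ι → ℝ) → ℝ, ContDiff ℝ ∞ ρ → ContDiff ℝ ∞ u →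
      ∑ i, sobolevSq (Set.Icc a b) n (ρ * partialDeriv i u) ≤
        C * (sobolevSq (Set.Icc a b) (n + 1) (ρ * u) +
          sobolevSq (Set.Icc a b) (t + 1) ρ * sobolevSq (Set.Icc a b) n u) := by
  obtain ⟨C, hC, hmul⟩ := exists_sobolevSq_mul_le hab hnt le_rfl (by omega : n + _ ≤ t + n)
  refine ⟨2 + 2 * C, by positivity, fun ρ u hρ hu => ?_⟩
  set W := sobolevSq (Set.Icc a b) (n + 1) (ρ * u)
  set R := sobolevSq (Set.Icc a b) (t + 1) ρ
  set U := sobolevSq (Set.Icc a b) n u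
  have hW : 0 ≤ W := sobolevSq_nonneg ..
  have hR : 0 ≤ R := sobolevSq_nonneg ..
  have hU : 0 ≤ U := sobolevSq_nonneg ..
  have hρu : ContDiff ℝ ∞ (ρ * u) := hρ.mul hu
  have hle (i : ι) : sobolevSq (Set.Icc a b) n (ρ * partialDeriv i u) ≤
      2 * sobolevSq (Set.Icc a b) n (partialDeriv i (ρ * u)) +
        2 * (C * (sobolevSq (Set.Icc a b) t (partialDeriv i ρ) * U)) := by
    have hcommutator : ρ * partialDeriv i u = partialDeriv i (ρ * u) - partialDeriv i ρ * u := by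
      rw [partialDeriv_mul (hρ.differentiable (by simp)) (hu.differentiable (by simp)),
        add_sub_cancel_left]
    have hρ_i := contDiff_partialDeriv hρ i
    rw [hcommutator]
    refine (sobolevSq_sub_le isCompact_Icc (contDiff_partialDeriv hρu i) (hρ_i.mul hu) n).trans ?_
    gcongr
    exact hmul _ _ hρ_i hu
  calc ∑ i, sobolevSq (Set.Icc a b) n (ρ * partialDeriv i u)
    _ ≤ ∑ i, (2 * sobolevSq (Set.Icc a b) n (partialDeriv i (ρ * u)) +
          2 * (C * (sobolevSq (Set.Icc a b) t (partialDeriv i ρ) * U))) :=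
      Finset.sum_le_sum fun i _ => hle i
    _ = 2 * ∑ i, sobolevSq (Set.Icc a b) n (partialDeriv i (ρ * u)) +
          2 * (C * ((∑ i, sobolevSq (Set.Icc a b) t (partialDeriv i ρ)) * U)) := by
      simp only [Finset.sum_add_distrib, Finset.mul_sum, Finset.sum_mul]
    _ ≤ 2 * W + 2 * (C * (R * U)) := by
      gcongr
      exacts [sum_sobolevSq_partialDeriv_le isCompact_Icc hρu n,
        sum_sobolevSq_partialDeriv_le isCompact_Icc hρ t]
    _ ≤ (2 + 2 * C) * (W + R * U) := by
      linarith [mul_nonneg hC.le hW, mul_nonneg hR hU]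

theorem exists_sobolevSq_succ_le_mul_left (hab : ∀ i, a i < b i) {c : ℝ} (hc : 0 < c) {n t : ℕ}
    (hnt : n ≤ t) (ht : Fintype.card ι ≤ t) :
    ∃ C > 0, ∀ ρ u : (ι → ℝ) → ℝ, ContDiff ℝ ∞ ρ → ContDiff ℝ ∞ u →
      (∀ x ∈ Set.Icc a b, c ≤ ρ x) →
        sobolevSq (Set.Icc a b) (n + 1) u ≤
          C * (sobolevSq (Set.Icc a b) (n + 1) (ρ * u) +
            sobolevSq (Set.Icc a b) (t + 1) ρ * sobolevSq (Set.Icc a b) n u) := by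
  induction n with
  | zero =>
    obtain ⟨C, hC, hcommutator⟩ := exists_sum_sobolevSq_mul_partialDeriv_le hab hnt ht
    refine ⟨(c ^ 2)⁻¹ * (1 + C), by positivity, fun ρ u hρ hu hcρ => ?_⟩
    have hle {v : (ι → ℝ) → ℝ} (hv : ContDiff ℝ ∞ v) :=
      sobolevSq_zero_le_mul_left isCompact_Icc hc hρ hv hcρ
    have hmono : sobolevSq (Set.Icc a b) 0 (ρ * u) ≤ sobolevSq (Set.Icc a b) (0 + 1) (ρ * u) :=
      sobolevSq_mono isCompact_Icc (hρ.mul hu) zero_le_one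
    have hRU := mul_nonneg (sobolevSq_nonneg (Set.Icc a b) (t + 1) ρ)
      (sobolevSq_nonneg (Set.Icc a b) 0 u)
    rw [sobolevSq_succ isCompact_Icc hu, mul_assoc]
    refine (add_le_add (hle hu)
      (Finset.sum_le_sum fun i _ => hle (contDiff_partialDeriv hu i))).trans ?_
    rw [← Finset.mul_sum, ← mul_add]
    gcongr
    linarith [hcommutator ρ u hρ hu]
  | succ n ih =>
    obtain ⟨C, hC, hcommutator⟩ := exists_sum_sobolevSq_mul_partialDeriv_le hab hnt ht
    obtain ⟨C', hC', hle⟩ := ih (Nat.le_of_succ_le hnt)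
    refine ⟨C' * (1 + C), by positivity, fun ρ u hρ hu hcρ => ?_⟩
    set R := sobolevSq (Set.Icc a b) (t + 1) ρ
    have hmono : sobolevSq (Set.Icc a b) (n + 1) (ρ * u) + R * sobolevSq (Set.Icc a b) n u +
        R * ∑ i, sobolevSq (Set.Icc a b) n (partialDeriv i u) ≤
        sobolevSq (Set.Icc a b) (n + 1 + 1) (ρ * u) + R * sobolevSq (Set.Icc a b) (n + 1) u := by
      rw [sobolevSq_succ isCompact_Icc hu n, mul_add, ← add_assoc]
      gcongr
      exact sobolevSq_mono isCompact_Icc (hρ.mul hu) (n + 1).le_succ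
    rw [sobolevSq_succ isCompact_Icc hu, mul_assoc]
    refine (add_le_add (hle ρ u hρ hu hcρ) (Finset.sum_le_sum fun i _ =>
      hle ρ _ hρ (contDiff_partialDeriv hu i) hcρ)).trans ?_
    rw [← Finset.mul_sum, ← mul_add, Finset.sum_add_distrib, ← Finset.mul_sum]
    gcongr
    linarith [hcommutator ρ u hρ hu]

theorem exists_sobolevSq_le_mul_left (hab : ∀ i, a i < b i) {c : ℝ} (hc : 0 < c) {n t : ℕ}
    (hnt : n ≤ t + 1) (ht : Fintype.card ι ≤ t) :
    ∃ C > 0, ∀ ρ u : (ι → ℝ) → ℝ, ContDiff ℝ ∞ ρ → ContDiff ℝ ∞ u →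
      (∀ x ∈ Set.Icc a b, c ≤ ρ x) →
        sobolevSq (Set.Icc a b) n u ≤
          C * (sobolevSq (Set.Icc a b) n (ρ * u) *
            (1 + sobolevSq (Set.Icc a b) (t + 1) ρ) ^ n) := by
  induction n with
  | zero =>
    refine ⟨(c ^ 2)⁻¹, by positivity, fun ρ u hρ hu hcρ => ?_⟩
    simpa using sobolevSq_zero_le_mul_left isCompact_Icc hc hρ hu hcρ
  | succ n ih =>
    obtain ⟨C, hC, hsucc⟩ :=
      exists_sobolevSq_succ_le_mul_left hab hc (Nat.le_of_succ_le_succ hnt) ht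
    obtain ⟨C', hC', hle⟩ := ih (by omega)
    refine ⟨C * (1 + C'), by positivity, fun ρ u hρ hu hcρ => ?_⟩
    set R := sobolevSq (Set.Icc a b) (t + 1) ρ
    set X := sobolevSq (Set.Icc a b) (n + 1) (ρ * u)
    have hR : 0 ≤ R := sobolevSq_nonneg ..
    have hX : 0 ≤ X := sobolevSq_nonneg ..
    calc sobolevSq (Set.Icc a b) (n + 1) u
      _ ≤ C * (X + R * sobolevSq (Set.Icc a b) n u) := hsucc ρ u hρ hu hcρ
      _ ≤ C * (X + R * (C' * (X * (1 + R) ^ n))) := by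
        gcongr
        refine (hle ρ u hρ hu hcρ).trans ?_
        gcongr
        exact sobolevSq_mono isCompact_Icc (hρ.mul hu) n.le_succ
      _ ≤ C * (X * (1 + R) ^ (n + 1) + (1 + R) * (C' * (X * (1 + R) ^ n))) := by
        gcongr
        · exact le_mul_of_one_le_right hX (one_le_pow₀ (le_add_of_nonneg_right hR))
        · exact le_add_of_nonneg_left zero_le_one
      _ = C * (1 + C') * (X * (1 + R) ^ (n + 1)) := by ring

theorem exists_sobolevSq_div_le (hab : ∀ i, a i < b i) {c : ℝ} (hc : 0 < c) {n t : ℕ}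
    (hnt : n ≤ t + 1) (ht : Fintype.card ι ≤ t) :
    ∃ C > 0, ∀ f ρ : (ι → ℝ) → ℝ, ContDiff ℝ ∞ f → ContDiff ℝ ∞ ρ → (∀ x, c ≤ ρ x) →
      sobolevSq (Set.Icc a b) n (f / ρ) ≤
        C * (sobolevSq (Set.Icc a b) n f * (1 + sobolevSq (Set.Icc a b) (t + 1) ρ) ^ n) := by
  obtain ⟨C, hC, hle⟩ := exists_sobolevSq_le_mul_left hab hc hnt ht
  refine ⟨C, hC, fun f ρ hf hρ hcρ => ?_⟩
  have hρ_ne (x : ι → ℝ) : ρ x ≠ 0 := (hc.trans_le (hcρ x)).ne'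
  have hcancel : ρ * (f / ρ) = f := funext fun x => mul_div_cancel₀ (f x) (hρ_ne x)
  simpa only [hcancel] using hle ρ (f / ρ) hρ (hf.div hρ hρ_ne) fun x _ => hcρ x

end SobolevAlgebra

section Torus

theorem q3_eq_Icc : Q3 = Set.Icc 0 fun _ => 2 * π :=
  Set.pi_univ_Icc _ _

theorem isCompact_q3 : IsCompact Q3 :=
  q3_eq_Icc ▸ isCompact_Icc

theorem pd_eq_partialDeriv (i : Fin 3) (f : SF) : pd i f = partialDeriv i f :=
  rfl

theorem contDiff_pdIter {f : SF} (hf : SmoothS f) (i : Fin 3) (n : ℕ) : SmoothS (pdIter i n f) := by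
  induction n with
  | zero => exact hf
  | succ n ih => exact contDiff_partialDeriv ih i

theorem contDiff_mderiv {f : SF} (hf : SmoothS f) (α : Fin 3 → ℕ) : SmoothS (mderiv α f) :=
  contDiff_pdIter (contDiff_pdIter (contDiff_pdIter hf 2 _) 1 _) 0 _

theorem partialDeriv_pdIter {f : SF} (hf : SmoothS f) (i j : Fin 3) (n : ℕ) :
    partialDeriv i (pdIter j n f) = pdIter j n (partialDeriv i f) := by
  induction n with
  | zero => rfl
  | succ n ih =>
    rw [pdIter, pdIter, ← ih]
    exact partialDeriv_comm ((contDiff_pdIter hf j n).of_le (by norm_cast)) i j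

theorem partialDeriv_mderiv {f : SF} (hf : SmoothS f) (i : Fin 3) (α : Fin 3 → ℕ) :
    partialDeriv i (mderiv α f) = mderiv (α + Pi.single i 1) f := by
  have hf₂ := contDiff_pdIter hf 2 (α 2)
  have hf₁ := contDiff_pdIter hf₂ 1 (α 1)
  fin_cases i
  · simp [mderiv, pdIter, pd_eq_partialDeriv]
  · simp [mderiv, pdIter, pd_eq_partialDeriv, partialDeriv_pdIter hf₁]
  · simp [mderiv, pdIter, pd_eq_partialDeriv, partialDeriv_pdIter hf₁, partialDeriv_pdIter hf₂]

theorem sobolevSq_pdIter_le {f : SF} (hf : SmoothS f) (i : Fin 3) (n k : ℕ) :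
    sobolevSq Q3 n (pdIter i k f) ≤ sobolevSq Q3 (n + k) f := by
  induction k generalizing n with
  | zero => exact le_rfl
  | succ k ih =>
    refine (sobolevSq_partialDeriv_le isCompact_q3 (contDiff_pdIter hf i k) n i).trans ?_
    rw [← add_assoc, add_right_comm]
    exact ih (n + 1)

theorem sobolevSq_mderiv_le {f : SF} (hf : SmoothS f) (α : Fin 3 → ℕ) (n : ℕ) :
    sobolevSq Q3 n (mderiv α f) ≤ sobolevSq Q3 (n + ∑ i, α i) f := by
  have hf₂ := contDiff_pdIter hf 2 (α 2)
  have hf₁ := contDiff_pdIter hf₂ 1 (α 1)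
  rw [Fin.sum_univ_three, ← add_assoc, ← add_assoc]
  exact ((sobolevSq_pdIter_le hf₁ 0 _ _).trans (sobolevSq_pdIter_le hf₂ 1 _ _)).trans
    (sobolevSq_pdIter_le hf 2 _ _)

theorem sq_rpow_one_half {x : ℝ} (hx : 0 ≤ x) : (x ^ (1 / 2 : ℝ)) ^ 2 = x := by
  rw [← Real.sqrt_eq_rpow, Real.sq_sqrt hx]

theorem l2_sq (f : SF) : L2 f ^ 2 = sobolevSq Q3 0 f :=
  sq_rpow_one_half (sobolevSq_nonneg Q3 0 f)

theorem hsNorm_sq (s : ℕ) (f : SF) :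
    HsNorm s f ^ 2 = ∑ α ∈ midx s, sobolevSq Q3 0 (mderiv α f) :=
  (sq_rpow_one_half (Finset.sum_nonneg fun _ _ => sq_nonneg _)).trans
    (Finset.sum_congr rfl fun _ _ => l2_sq _)

theorem hsNormV_sq (s : ℕ) (v : VF) : HsNormV s v ^ 2 = ∑ i, HsNorm s (v i) ^ 2 :=
  sq_rpow_one_half (Finset.sum_nonneg fun _ _ => sq_nonneg _)

theorem hsNorm_nonneg (s : ℕ) (f : SF) : 0 ≤ HsNorm s f :=
  Real.rpow_nonneg (Finset.sum_nonneg fun _ _ => sq_nonneg _) _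

theorem hsNormV_nonneg (s : ℕ) (v : VF) : 0 ≤ HsNormV s v :=
  Real.rpow_nonneg (Finset.sum_nonneg fun _ _ => sq_nonneg _) _

theorem mem_midx {s : ℕ} {α : Fin 3 → ℕ} : α ∈ midx s ↔ ∑ i, α i ≤ s := by
  simp only [midx, Finset.mem_filter, Fintype.mem_piFinset, Finset.mem_range, Nat.lt_succ_iff,
    and_iff_right_iff_imp]
  exact fun hα i => (Finset.single_le_sum (fun _ _ => Nat.zero_le _) (Finset.mem_univ i)).trans hα

theorem hsNorm_mono (f : SF) : Monotone fun s => HsNorm s f := by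
  intro s t hst
  refine Real.rpow_le_rpow (Finset.sum_nonneg fun _ _ => sq_nonneg _) ?_ (by norm_num)
  exact Finset.sum_le_sum_of_subset_of_nonneg
    (fun α hα => mem_midx.2 ((mem_midx.1 hα).trans hst)) fun _ _ _ => sq_nonneg _

theorem sobolevSq_mderiv_le_hsNorm_sq {f : SF} (hf : SmoothS f) {s n : ℕ} {α : Fin 3 → ℕ}
    (hα : ∑ i, α i + n ≤ s) : sobolevSq Q3 n (mderiv α f) ≤ 4 ^ n * HsNorm s f ^ 2 := by
  induction n generalizing α with
  | zero =>
    rw [pow_zero, one_mul, hsNorm_sq]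
    exact Finset.single_le_sum (f := fun α => sobolevSq Q3 0 (mderiv α f))
      (fun _ _ => sobolevSq_nonneg ..) (mem_midx.2 hα)
  | succ n ih =>
    have hpartial (i : Fin 3) :
        sobolevSq Q3 n (partialDeriv i (mderiv α f)) ≤ 4 ^ n * HsNorm s f ^ 2 := by
      rw [partialDeriv_mderiv hf]
      refine ih ?_
      simp only [Pi.add_apply, Finset.sum_add_distrib, Finset.sum_pi_single', Finset.mem_univ,
        if_true]
      omega
    rw [sobolevSq_succ isCompact_q3 (contDiff_mderiv hf α), Fin.sum_univ_three, pow_succ]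
    linarith [ih (α := α) (by omega), hpartial 0, hpartial 1, hpartial 2]

theorem sobolevSq_le_hsNorm_sq {f : SF} (hf : SmoothS f) (s : ℕ) :
    sobolevSq Q3 s f ≤ 4 ^ s * HsNorm s f ^ 2 :=
  sobolevSq_mderiv_le_hsNorm_sq (α := 0) hf (by simp)

theorem sq_hsNorm_le_sq_hsNormV (s : ℕ) (v : VF) (i : Fin 3) :
    HsNorm s (v i) ^ 2 ≤ HsNormV s v ^ 2 := by
  rw [hsNormV_sq]
  exact Finset.single_le_sum (f := fun i => HsNorm s (v i) ^ 2) (fun _ _ => sq_nonneg _)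
    (Finset.mem_univ i)

theorem contDiff_normSq {v : VF} (hv : SmoothV v) : SmoothS (normSq v) :=
  ContDiff.sum fun i _ => (hv i).pow 2

theorem exists_sobolevSq_normSq_le {s : ℕ} (hs : 3 ≤ s) :
    ∃ C > 0, ∀ v : VF, SmoothV v → sobolevSq Q3 s (normSq v) ≤ C * HsNormV s v ^ 4 := by
  obtain ⟨C, hC, hmul⟩ := exists_sobolevSq_mul_le (ι := Fin 3) (a := 0) (b := fun _ => 2 * π)
    (fun _ => Real.two_pi_pos) (le_refl s) (le_refl s) (by simpa using hs)
  rw [← q3_eq_Icc] at hmul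
  refine ⟨10 * C * 16 ^ s, by positivity, fun v hv => ?_⟩
  have hcomponent (i : Fin 3) : sobolevSq Q3 s (v i) ≤ 4 ^ s * HsNormV s v ^ 2 :=
    (sobolevSq_le_hsNorm_sq (hv i) s).trans
      (mul_le_mul_of_nonneg_left (sq_hsNorm_le_sq_hsNormV s v i) (by positivity))
  have hsq (i : Fin 3) : sobolevSq Q3 s (v i * v i) ≤ C * (16 ^ s * HsNormV s v ^ 4) :=
    calc sobolevSq Q3 s (v i * v i)
      _ ≤ C * (sobolevSq Q3 s (v i) * sobolevSq Q3 s (v i)) := hmul _ _ (hv i) (hv i)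
      _ ≤ C * ((4 ^ s * HsNormV s v ^ 2) * (4 ^ s * HsNormV s v ^ 2)) :=
        mul_le_mul_of_nonneg_left
          (mul_self_le_mul_self (sobolevSq_nonneg ..) (hcomponent i)) hC.le
      _ = C * (16 ^ s * HsNormV s v ^ 4) := by
        rw [mul_mul_mul_comm, ← mul_pow, ← pow_add]
        norm_num
  have hsplit : normSq v = v 0 * v 0 + v 1 * v 1 + v 2 * v 2 := by
    funext x
    simp only [normSq, Fin.sum_univ_three, sq, Pi.add_apply, Pi.mul_apply]
  have hsmooth (i : Fin 3) : SmoothS (v i * v i) := (hv i).mul (hv i)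
  have hsum₂ := sobolevSq_add_le (f := v 0 * v 0 + v 1 * v 1) isCompact_q3
    ((hsmooth 0).add (hsmooth 1)) (hsmooth 2) s
  have hsum₁ := sobolevSq_add_le isCompact_q3 (hsmooth 0) (hsmooth 1) s
  rw [hsplit]
  linarith [hsq 0, hsq 1, hsq 2]

theorem add_mul_sq_pow_le {A B x : ℝ} (hA : 0 ≤ A) (hB : 0 ≤ B) (hx : 0 ≤ x) (s : ℕ) :
    (B + A * x ^ 2) ^ s ≤ (B + A) ^ s * (1 + x ^ (2 * (s + 1))) := by
  rcases le_total x 1 with hx1 | hx1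
  · calc (B + A * x ^ 2) ^ s ≤ (B + A) ^ s := by
          gcongr
          exact mul_le_of_le_one_right hA (pow_le_one₀ hx hx1)
      _ ≤ (B + A) ^ s * (1 + x ^ (2 * (s + 1))) :=
        le_mul_of_one_le_right (by positivity) (le_add_of_nonneg_right (by positivity))
  · calc (B + A * x ^ 2) ^ s ≤ ((B + A) * x ^ 2) ^ s := by
          gcongr
          linarith [le_mul_of_one_le_right hB (one_le_pow₀ hx1 (n := 2))]
      _ = (B + A) ^ s * x ^ (2 * s) := by rw [mul_pow, pow_mul]
      _ ≤ (B + A) ^ s * (1 + x ^ (2 * (s + 1))) := by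
        gcongr
        exact (pow_le_pow_right₀ hx1 (by omega)).trans (le_add_of_nonneg_left zero_le_one)

theorem exists_one_add_sobolevSq_add_pow_le (s : ℕ) (K : ℝ) :
    ∃ C > 0, ∀ f g : SF, SmoothS f → SmoothS g → HsNorm s g ≤ K → ∀ y, HsNorm s f ≤ y →
      (1 + sobolevSq Q3 s (f + g)) ^ s ≤ C * (1 + y ^ (2 * (s + 1))) := by
  refine ⟨(1 + 2 * (4 ^ s * K ^ 2) + 2 * 4 ^ s) ^ s, by positivity,
    fun f g hf hg hgK y hfy => ?_⟩
  have hf_le : sobolevSq Q3 s f ≤ 4 ^ s * y ^ 2 := by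
    refine (sobolevSq_le_hsNorm_sq hf s).trans ?_
    gcongr
    exact hsNorm_nonneg s f
  have hg_le : sobolevSq Q3 s g ≤ 4 ^ s * K ^ 2 := by
    refine (sobolevSq_le_hsNorm_sq hg s).trans ?_
    gcongr
    exact hsNorm_nonneg s g
  have hsum_le : 1 + sobolevSq Q3 s (f + g) ≤ 1 + 2 * (4 ^ s * K ^ 2) + 2 * 4 ^ s * y ^ 2 := by
    linarith [sobolevSq_add_le isCompact_q3 hf hg s]
  exact (pow_le_pow_left₀ (add_nonneg zero_le_one (sobolevSq_nonneg ..)) hsum_le s).trans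
    (add_mul_sq_pow_le (by positivity) (by positivity) ((hsNorm_nonneg s f).trans hfy) s)

theorem exists_sq_l2_mderiv_normSq_div_le {s : ℕ} (hs : 4 ≤ s) (K : ℝ) {c : ℝ} (hc : 0 < c) :
    ∃ C > 0, ∀ (ρ0 N : SF) (F : VF), SmoothS ρ0 → SmoothS N → SmoothV F → HsNorm s ρ0 ≤ K →
      (∀ x, c ≤ N x + ρ0 x) → ∀ α : Fin 3 → ℕ, ∑ i, α i ≤ s →
        L2 (mderiv α (fun y => normSq F y / (N y + ρ0 y))) ^ 2 ≤
          C * HsNormV s F ^ 4 * (1 + (HsNorm s N + HsNormV s F) ^ (2 * (s + 1))) := by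
  obtain ⟨t, rfl⟩ : ∃ t, s = t + 1 := ⟨s - 1, by omega⟩
  obtain ⟨C₁, hC₁, hdiv⟩ := exists_sobolevSq_div_le (ι := Fin 3) (a := 0) (b := fun _ => 2 * π)
    (fun _ => Real.two_pi_pos) hc (le_refl (t + 1)) (by rw [Fintype.card_fin]; omega)
  rw [← q3_eq_Icc] at hdiv
  obtain ⟨C₂, hC₂, hnormSq⟩ := exists_sobolevSq_normSq_le (by omega : 3 ≤ t + 1)
  obtain ⟨C₃, hC₃, hdensity⟩ := exists_one_add_sobolevSq_add_pow_le (t + 1) K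
  refine ⟨C₁ * C₂ * C₃, by positivity, fun ρ0 N F hρ0 hN hF hK hcρ α hα => ?_⟩
  have hq : SmoothS (normSq F / (N + ρ0)) :=
    (contDiff_normSq hF).div (hN.add hρ0) fun x => (hc.trans_le (hcρ x)).ne'
  calc L2 (mderiv α (normSq F / (N + ρ0))) ^ 2
    _ = sobolevSq Q3 0 (mderiv α (normSq F / (N + ρ0))) := l2_sq _
    _ ≤ sobolevSq Q3 (t + 1) (normSq F / (N + ρ0)) :=
      (sobolevSq_mderiv_le hq α 0).trans (sobolevSq_mono isCompact_q3 hq (by omega))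
    _ ≤ C₁ * (sobolevSq Q3 (t + 1) (normSq F) * (1 + sobolevSq Q3 (t + 1) (N + ρ0)) ^ (t + 1)) :=
      hdiv _ _ (contDiff_normSq hF) (hN.add hρ0) hcρ
    _ ≤ C₁ * (C₂ * HsNormV (t + 1) F ^ 4 *
          (C₃ * (1 + (HsNorm (t + 1) N + HsNormV (t + 1) F) ^ (2 * (t + 1 + 1))))) := by
      gcongr
      · exact pow_nonneg (add_nonneg zero_le_one (sobolevSq_nonneg ..)) _
      · exact hnormSq F hF
      · exact hdensity N ρ0 hN hρ0 hK _ (le_add_of_nonneg_right (hsNormV_nonneg ..))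
    _ = _ := by ring

theorem ip_le_mul_sq_l2_add {f g : Pt → ℝ} (hf : Continuous f) (hg : Continuous g) {e : ℝ}
    (he : 0 < e) : ip f g ≤ e * L2 f ^ 2 + (4 * e)⁻¹ * L2 g ^ 2 := by
  have hint {h : Pt → ℝ} (hh : Continuous h) : IntegrableOn h Q3 :=
    hh.continuousOn.integrableOn_compact isCompact_q3
  have hsq (h : SF) : L2 h ^ 2 = ∫ x in Q3, h x ^ 2 := l2_sq h
  rw [ip, hsq, hsq, ← integral_const_mul, ← integral_const_mul,
    ← integral_add (hint (by fun_prop)) (hint (by fun_prop))]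
  refine integral_mono (hint (by fun_prop)) (hint (by fun_prop)) fun x => ?_
  have hsquare : e * f x ^ 2 + (4 * e)⁻¹ * g x ^ 2 - f x * g x =
      (4 * e)⁻¹ * (2 * e * f x - g x) ^ 2 := by
    field_simp
    ring
  exact sub_nonneg.1 (hsquare ▸ by positivity)

theorem joule_heating_estimate_general {s : ℕ} (hs : 4 ≤ s) (K : ℝ) {c : ℝ} (hc : 0 < c) :
    ∀ γ > (0 : ℝ), ∃ C > (0 : ℝ), ∀ (ρ0 N : SF) (F : VF), SmoothS ρ0 → SmoothS N → SmoothV F →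
      HsNorm s ρ0 ≤ K → (∀ x, c ≤ N x + ρ0 x) → ∀ α : Fin 3 → ℕ, ∑ i, α i ≤ s →
        ∀ g : SF, Continuous g →
          ip (mderiv α (fun y => normSq F y / (N y + ρ0 y))) g ≤ γ * HsNormV s F ^ 4 +
            C * (1 + (HsNorm s N + HsNormV s F) ^ (2 * (s + 1))) * L2 g ^ 2 := by
  intro γ hγ
  obtain ⟨C, hC, hquotient⟩ := exists_sq_l2_mderiv_normSq_div_le hs K hc
  refine ⟨C / (4 * γ), by positivity, fun ρ0 N F hρ0 hN hF hK hcρ α hα g hg => ?_⟩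
  have hq : SmoothS fun y => normSq F y / (N y + ρ0 y) :=
    (contDiff_normSq hF).div (hN.add hρ0) fun x => (hc.trans_le (hcρ x)).ne'
  set M := 1 + (HsNorm s N + HsNormV s F) ^ (2 * (s + 1))
  have hM : 0 < M :=
    add_pos_of_pos_of_nonneg one_pos ((even_two.mul_right _).pow_nonneg _)
  calc ip (mderiv α fun y => normSq F y / (N y + ρ0 y)) g
    _ ≤ γ / (C * M) * L2 (mderiv α fun y => normSq F y / (N y + ρ0 y)) ^ 2 +
          (4 * (γ / (C * M)))⁻¹ * L2 g ^ 2 :=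
      ip_le_mul_sq_l2_add (contDiff_mderiv hq α).continuous hg (by positivity)
    _ ≤ γ / (C * M) * (C * HsNormV s F ^ 4 * M) + (4 * (γ / (C * M)))⁻¹ * L2 g ^ 2 := by
      gcongr
      exact hquotient ρ0 N F hρ0 hN hF hK hcρ α hα
    _ = γ * HsNormV s F ^ 4 + C / (4 * γ) * M * L2 g ^ 2 := by
      field_simp

end Torus

/-- estimate of the quadratic Joule-heating term.
Let `s > 7/2` be an integer and `|α| ≤ s`. Suppose `ρ⁰ ∈ H^{s+1}(𝕋³)` with
`‖ρ⁰‖_{H^{s+1}} ≤ K` and `ρ⁰ ≥ ρ̂ > 0`; let `N ∈ H^s` with `N + ρ⁰ ≥ ρ̂/2`,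
`F ∈ H^s(𝕋³;ℝ³)`, `Θ ∈ H^s` (here: smooth periodic). Then for every `γ > 0` there
is `C_γ = C(γ,s,K,ρ̂)` with
`⟨∂^α(|F|²/(N+ρ⁰)), ∂^αΘ⟩_{L²} ≤ γ‖F‖⁴_{H^s} + C_γ(1+‖(N,F)‖^{2(s+1)}_{H^s})‖∂^αΘ‖²_{L²}`. -/
theorem joule_heating_estimate (s : ℕ) (hs : 7/2 < (s:ℝ)) (α : Fin 3 → ℕ)
    (hα : (∑ i, α i) ≤ s) (K ρhat : ℝ) (hρhat : 0 < ρhat) :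
    ∀ γ > (0:ℝ), ∃ C > (0:ℝ),
      ∀ ρ0 : SF, SmoothS ρ0 → PerS ρ0 → HsNorm (s+1) ρ0 ≤ K → (∀ x, ρhat ≤ ρ0 x) →
      ∀ (N Θ : SF) (F : VF), SmoothS N → PerS N → SmoothS Θ → PerS Θ →
        SmoothV F → PerV F → (∀ x, ρhat / 2 ≤ N x + ρ0 x) →
        ip (mderiv α (fun y => normSq F y / (N y + ρ0 y))) (mderiv α Θ)
          ≤ γ * (HsNormV s F) ^ 4
            + C * (1 + (HsNorm s N + HsNormV s F) ^ (2 * (s + 1)))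
                * (L2 (mderiv α Θ)) ^ 2 := by
  intro γ hγ
  obtain ⟨C, hC, hle⟩ := joule_heating_estimate_general
    (by exact_mod_cast (by linarith : (3 : ℝ) < s) : 4 ≤ s) K (half_pos hρhat) γ hγ
  exact ⟨C, hC, fun ρ0 hρ0 _ hK _ N Θ F hN _ hΘ _ hF _ hlower =>
    hle ρ0 N F hρ0 hN hF ((hsNorm_mono ρ0 s.le_succ).trans hK) hlower α hα _
      (contDiff_mderiv hΘ α).continuous⟩
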